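/- Let G be a graph with n vertices and let κ be an integer with 1 ≤ κ ≤ n. Then there is a decision tree obtainable from T(G) by a (possibly empty) sequence of subtree raising operations that has at most n − κ errors on E₀(G,κ) if and only if G has an independent set of size κ. -/

import Mathlib

/-- The two class labels. -/
inductive Label where
  | blue
  | red
deriving DecidableEq

/-- A decision tree over examples `ι → ℝ` with classes `{blue, red}`:
every inner node carries a feature and a threshold, every leaf a class label.
An example goes to the left child if its value in the node's feature is at most
the threshold, and to the right child otherwise. -/
inductive DTree (ι : Type) where
  | leaf (c : Label)
  | node (feat : ι) (thr : ℝ) (left right : DTree ι)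

namespace DTree

variable {ι : Type}

/-- The class that a decision tree assigns to an example. -/
noncomputable def classify : DTree ι → (ι → ℝ) → Label
  | .leaf c, _ => c
  | .node f t l r, e => if e f ≤ t then l.classify e else r.classify e

/-- The routing path of an example (`false` = left child, `true` = right child);
it is the position of the leaf of the example. -/
noncomputable def route : DTree ι → (ι → ℝ) → List Bool
  | .leaf _, _ => []
  | .node f t l r, e => if e f ≤ t then false :: l.route e else true :: r.route e

/-- The subtree rooted at a position (`none` if the position is not a node). -/
def subtreeAt : DTree ι → List Bool → Option (DTree ι)
  | T, [] => some T
  | .leaf _, _ :: _ => none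
  | .node _ _ l r, b :: p => (if b then r else l).subtreeAt p

/-- Replace the subtree at a given position by another tree. -/
def replaceAt : DTree ι → List Bool → DTree ι → DTree ι
  | _, [], T' => T'
  | .leaf c, _ :: _, _ => .leaf c
  | .node f t l r, b :: p, T' =>
      if b then .node f t l (r.replaceAt p T') else .node f t (l.replaceAt p T') r

/-- The number of inner nodes of a decision tree. -/
def innerCount : DTree ι → ℕ
  | .leaf _ => 0
  | .node _ _ l r => 1 + l.innerCount + r.innerCount

/-- The position `p` is an inner node of `T`. -/
def IsInnerPos (T : DTree ι) (p : List Bool) : Prop :=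
  ∃ f t l r, T.subtreeAt p = some (.node f t l r)

/-- The position `p` is a node of `T`. -/
def IsNodePos (T : DTree ι) (p : List Bool) : Prop :=
  (T.subtreeAt p).isSome

/-- The feature and threshold of the inner node at position `p`. -/
def cutAt (T : DTree ι) (p : List Bool) : Option (ι × ℝ) :=
  match T.subtreeAt p with
  | some (.node f t _ _) => some (f, t)
  | _ => none

/-- The subtree raising operation at position `q` keeping the child in direction `b`:
the subtree rooted at `q` is replaced by the subtree rooted at its `b`-child; it prunes
the node at `q` together with all inner nodes of the subtree rooted at the other child. -/
def raiseAt (T : DTree ι) (q : List Bool) (b : Bool) : DTree ι :=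
  match T.subtreeAt q with
  | some (.node _ _ l r) => T.replaceAt q (if b then r else l)
  | _ => T

end DTree

/-- `E[T,p]`: the examples of `E` whose routing through `T` passes the position `p`. -/
noncomputable def reach {ι : Type} (E : Finset (ι → ℝ)) (T : DTree ι) (p : List Bool) :
    Finset (ι → ℝ) :=
  E.filter fun e => p <+: T.route e

/-- The number of errors of `T` on the training set `(E, lab)`. -/
noncomputable def errCount {ι : Type} (T : DTree ι) (E : Finset (ι → ℝ))
    (lab : (ι → ℝ) → Label) : ℕ :=
  (E.filter fun e => T.classify e ≠ lab e).card

/-- A most frequent label of the labeled set `(E, lab)` (blue in case of a tie). -/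
def majorityLabel {ι : Type} (E : Finset (ι → ℝ)) (lab : (ι → ℝ) → Label) : Label :=
  if (E.filter fun e => lab e = Label.red).card ≤ (E.filter fun e => lab e = Label.blue).card
  then Label.blue else Label.red

/-- One subtree replacement operation: some inner node of `T` is replaced by a leaf
labeled with a most frequent label of the examples reaching it. -/
def ReplStep {ι : Type} (E : Finset (ι → ℝ)) (lab : (ι → ℝ) → Label)
    (T T' : DTree ι) : Prop :=
  ∃ p, T.IsInnerPos p ∧
    T' = T.replaceAt p (.leaf (majorityLabel (reach E T p) lab))

/-- `T` is a reasonable decision tree for `(E, lab)`: every node is reached by some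
example and every leaf carries a most frequent label of the examples reaching it. -/
def Reasonable {ι : Type} (E : Finset (ι → ℝ)) (lab : (ι → ℝ) → Label)
    (T : DTree ι) : Prop :=
  (∀ p, T.IsNodePos p → (reach E T p).Nonempty) ∧
  (∀ p c, T.subtreeAt p = some (.leaf c) → ∀ c' : Label,
    ((reach E T p).filter fun e => lab e = c').card ≤
      ((reach E T p).filter fun e => lab e = c).card)

/-- Apply a sequence of raising operations (given by positions and kept directions). -/
def applySeq {ι : Type} : DTree ι → List (List Bool × Bool) → DTree ι
  | T, [] => T
  | T, (q, b) :: rest => applySeq (T.raiseAt q b) rest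

/-- Each raising operation of the sequence is applied at an inner node. -/
def ValidSeq {ι : Type} : DTree ι → List (List Bool × Bool) → Prop
  | _, [] => True
  | T, (q, b) :: rest => T.IsInnerPos q ∧ ValidSeq (T.raiseAt q b) rest

/-- The total number of inner nodes pruned by a sequence of raising operations. -/
def seqPruned {ι : Type} : DTree ι → List (List Bool × Bool) → ℕ
  | _, [] => 0
  | T, (q, b) :: rest =>
      (match T.subtreeAt q with
        | some (.node _ _ l r) => 1 + DTree.innerCount (if b then l else r)
        | _ => 0) + seqPruned (T.raiseAt q b) rest

/-- `T'` is obtained from `T` by a (possibly empty) sequence of subtree raising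
operations. -/
def RaisedFrom {ι : Type} (T T' : DTree ι) : Prop :=
  ∃ steps, ValidSeq T steps ∧ applySeq T steps = T'

/-- `T'` is obtained from `T` by a sequence of subtree raising operations pruning
exactly `m` inner nodes in total. -/
def RaisedFromPruning {ι : Type} (T : DTree ι) (m : ℕ) (T' : DTree ι) : Prop :=
  ∃ steps, ValidSeq T steps ∧ seqPruned T steps = m ∧ applySeq T steps = T'

/-- Tracking the position of a node through one raising operation: nodes strictly
below the raised node on the discarded side, and the raised node itself, are pruned
(`none`); all other nodes survive at a possibly shifted position. -/
def stepMap (q : List Bool) (b : Bool) (p : List Bool) : Option (List Bool) :=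
  if q <+: p then
    if q ++ [b] <+: p then some (q ++ p.drop (q.length + 1)) else none
  else some p

/-- Tracking the position of a node through a sequence of raising operations. -/
def seqMap : List (List Bool × Bool) → List Bool → Option (List Bool)
  | [], p => some p
  | (q, b) :: rest, p => (stepMap q b p).bind (seqMap rest)

/-- The number of errors of `T` on a multiset of labeled examples. -/
noncomputable def errCountM {ι : Type} (T : DTree ι) (E : Multiset ((ι → ℝ) × Label)) : ℕ :=
  (E.filter fun q => T.classify q.1 ≠ q.2).card

/-- The 0/1 indicator vector of a set of coordinates. -/
def indVec {m : ℕ} (S : Finset (Fin m)) : Fin m → ℝ := fun i => if i ∈ S then 1 else 0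

/-- The blue edge example of an edge `{v, w}`: value `1` exactly in the
coordinates `v` and `w`. -/
def edgeEx (n : ℕ) : Sym2 (Fin n) → (Fin (n + 1) → ℝ) :=
  Sym2.lift ⟨fun v w => indVec {v.castSucc, w.castSucc},
    fun v w => by simp only []; rw [Finset.pair_comm]⟩

/-- The blue vertex example of a vertex `v`: value `1` exactly in the coordinates
`v` and `d*` (the last coordinate). -/
def vertEx (n : ℕ) (v : Fin n) : Fin (n + 1) → ℝ := indVec {v.castSucc, Fin.last n}

/-- The blue example with value `1` only in the coordinate `d*`. -/
def starEx (n : ℕ) : Fin (n + 1) → ℝ := indVec {Fin.last n}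

/-- The labeling: the all-zero example is red, all other examples are blue. -/
noncomputable def labG (n : ℕ) : (Fin (n + 1) → ℝ) → Label :=
  fun e => if e = (fun _ => 0) then Label.red else Label.blue

/-- The training set `E(G)` of the independent-set construction. -/
noncomputable def EG {n : ℕ} (G : SimpleGraph (Fin n)) [DecidableRel G.Adj] :
    Finset (Fin (n + 1) → ℝ) :=
  (G.edgeFinset.image (edgeEx n)) ∪ (Finset.univ.image (vertEx n)) ∪
    {starEx n, fun _ => 0}

/-- A descending path of cuts `f ≤ 0` (for `f` in the given list) whose right
children are blue leaves and whose left children continue the path, ending in the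
given tree. -/
def chainB {m : ℕ} (fs : List (Fin m)) (tail : DTree (Fin m)) : DTree (Fin m) :=
  fs.foldr (fun f acc => DTree.node f 0 acc (.leaf .blue)) tail

/-- The decision tree `T(G)`: the path of cuts `v₁ ≤ 0, …, vₙ ≤ 0, d* ≤ 0`; at each
vertex cut the right child is a blue leaf; the final cut has a red left child and a
blue right child. -/
def TG (n : ℕ) : DTree (Fin (n + 1)) :=
  chainB (List.ofFn fun i : Fin n => i.castSucc)
    (DTree.node (Fin.last n) 0 (.leaf .red) (.leaf .blue))

/-- The tree obtained from `T(G)` by applying, at each cut `v ≤ 0` with `v ∈ R`,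
the raising operation keeping the child that continues the path: the path of the
cuts `v ≤ 0` for `v ∉ R` followed by the cut `d* ≤ 0`. -/
def TGkeep (n : ℕ) (R : Finset (Fin n)) : DTree (Fin (n + 1)) :=
  chainB (((List.ofFn fun i : Fin n => i).filter fun v => decide (v ∉ R)).map Fin.castSucc)
    (DTree.node (Fin.last n) 0 (.leaf .red) (.leaf .blue))

/-- The training set `E₀(G,κ)` of the independent-set construction with duplicated
examples, where `t = n - κ`: for each edge, `n` identical blue edge examples; for
each vertex `v`, one blue example (value `1` at `v` and `d*`) and one red example
(value `1` only at `v`); `n²` identical all-zero red examples; and `t + 1`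
identical blue examples with value `1` only at `d*`. -/
noncomputable def E0 {n : ℕ} (G : SimpleGraph (Fin n)) [DecidableRel G.Adj]
    (κ : ℕ) : Multiset ((Fin (n + 1) → ℝ) × Label) :=
  (G.edgeFinset.val.bind fun s => Multiset.replicate n (edgeEx n s, Label.blue))
  + (Finset.univ.val.bind fun v : Fin n =>
      {(vertEx n v, Label.blue), (indVec {v.castSucc}, Label.red)})
  + Multiset.replicate (n ^ 2) ((fun _ => 0), Label.red)
  + Multiset.replicate (n - κ + 1) (starEx n, Label.blue)

/-!
Raising inside a path of cuts with blue right leaves either deletes cuts from the path or cuts the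
path off at a single leaf. In the second case the tree errs on all `n²` zero examples (blue leaf)
or on all `t + 1` examples at `d*` (red leaf), in either case on more than `t = n - κ` examples.
In the first case the tree is `TGkeep n R`, where `R` is the set of vertices whose cuts are gone:
it errs `n > t` times for each edge inside `R` and once for each vertex outside `R`. So at most `t`
errors means that `R` is independent and has at least `κ` elements.
-/

section Raising

open Relation

variable {ι : Type} {f : ι} {t : ℝ} {l r T T' : DTree ι}

/-- A single subtree raising operation: some inner node of `T` is replaced by one of its
children. -/
def RaiseStep (T T' : DTree ι) : Prop :=
  ∃ q b, T.IsInnerPos q ∧ T.raiseAt q b = T'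

theorem not_raiseStep_leaf (c : Label) : ¬ RaiseStep (.leaf c) T := by
  rintro ⟨_ | _, _, ⟨_, _, _, _, h⟩, -⟩ <;> simp [DTree.subtreeAt] at h

theorem DTree.raiseAt_node_cons (d b : Bool) (q : List Bool) :
    (DTree.node f t l r).raiseAt (d :: q) b =
      if d then .node f t l (r.raiseAt q b) else .node f t (l.raiseAt q b) r := by
  cases d <;>
    simp only [DTree.raiseAt, DTree.subtreeAt, if_true, if_false, Bool.false_eq_true] <;>
    split <;> simp [DTree.replaceAt]

theorem raiseStep_node_iff :
    RaiseStep (.node f t l r) T ↔ T = l ∨ T = r ∨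
      (∃ l', RaiseStep l l' ∧ T = .node f t l' r) ∨
      ∃ r', RaiseStep r r' ∧ T = .node f t l r' := by
  constructor
  · rintro ⟨_ | ⟨_ | _, q⟩, b, hq, rfl⟩
    · cases b <;> simp [DTree.raiseAt, DTree.subtreeAt, DTree.replaceAt]
    · exact .inr <| .inr <| .inl ⟨_, ⟨q, b, hq, rfl⟩, DTree.raiseAt_node_cons ..⟩
    · exact .inr <| .inr <| .inr ⟨_, ⟨q, b, hq, rfl⟩, DTree.raiseAt_node_cons ..⟩
  · rintro (rfl | rfl | ⟨_, ⟨q, b, hq, rfl⟩, rfl⟩ | ⟨_, ⟨q, b, hq, rfl⟩, rfl⟩)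
    · exact ⟨[], false, ⟨f, t, _, _, rfl⟩, rfl⟩
    · exact ⟨[], true, ⟨f, t, _, _, rfl⟩, rfl⟩
    · exact ⟨false :: q, b, hq, DTree.raiseAt_node_cons ..⟩
    · exact ⟨true :: q, b, hq, DTree.raiseAt_node_cons ..⟩

theorem raisedFrom_iff_reflTransGen : RaisedFrom T T' ↔ ReflTransGen RaiseStep T T' := by
  constructor
  · rintro ⟨steps, hvalid, rfl⟩
    induction steps generalizing T with
    | nil => exact .refl
    | cons s _ ih => exact .head ⟨s.1, s.2, hvalid.1, rfl⟩ (ih hvalid.2)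
  · intro h
    induction h using ReflTransGen.head_induction_on with
    | refl => exact ⟨[], trivial, rfl⟩
    | head hstep _ ih =>
      obtain ⟨q, b, hq, rfl⟩ := hstep
      obtain ⟨steps, hvalid, rfl⟩ := ih
      exact ⟨(q, b) :: steps, ⟨hq, hvalid⟩, rfl⟩

theorem raisedFrom_leaf_iff {c : Label} : RaisedFrom (.leaf c) T ↔ T = .leaf c := by
  rw [raisedFrom_iff_reflTransGen, reflTransGen_iff_eq fun _ => not_raiseStep_leaf c]

theorem raisedFrom_node_iff :
    RaisedFrom (.node f t l r) T ↔ RaisedFrom l T ∨ RaisedFrom r T ∨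
      ∃ l' r', RaisedFrom l l' ∧ RaisedFrom r r' ∧ T = .node f t l' r' := by
  simp only [raisedFrom_iff_reflTransGen]
  constructor
  · intro h
    induction h with
    | refl => exact .inr <| .inr ⟨l, r, .refl, .refl, rfl⟩
    | tail _ hstep ih =>
      rcases ih with hl | hr | ⟨l', r', hl, hr, rfl⟩
      · exact .inl (hl.tail hstep)
      · exact .inr <| .inl (hr.tail hstep)
      · rcases raiseStep_node_iff.1 hstep with rfl | rfl | ⟨l'', hl', rfl⟩ | ⟨r'', hr', rfl⟩
        · exact .inl hl
        · exact .inr <| .inl hr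
        · exact .inr <| .inr ⟨l'', r', hl.tail hl', hr, rfl⟩
        · exact .inr <| .inr ⟨l', r'', hl, hr.tail hr', rfl⟩
  · rintro (hl | hr | ⟨l', r', hl, hr, rfl⟩)
    · exact .head (raiseStep_node_iff.2 (.inl rfl)) hl
    · exact .head (raiseStep_node_iff.2 (.inr <| .inl rfl)) hr
    · have raise_left : ReflTransGen RaiseStep (.node f t l r) (.node f t l' r) :=
        hl.lift (DTree.node f t · r) fun _ _ h =>
          raiseStep_node_iff.2 <| .inr <| .inr <| .inl ⟨_, h, rfl⟩
      have raise_right : ReflTransGen RaiseStep (.node f t l' r) (.node f t l' r') :=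
        hr.lift (DTree.node f t l' ·) fun _ _ h =>
          raiseStep_node_iff.2 <| .inr <| .inr <| .inr ⟨_, h, rfl⟩
      exact raise_left.trans raise_right

theorem raisedFrom_node_leaf_leaf_iff {c c' : Label} :
    RaisedFrom (.node f t (.leaf c) (.leaf c')) T ↔
      T = .node f t (.leaf c) (.leaf c') ∨ T = .leaf c ∨ T = .leaf c' := by
  simp only [raisedFrom_node_iff, raisedFrom_leaf_iff]
  grind

end Raising

section Chain

variable {m : ℕ} {fs : List (Fin m)} {tail T : DTree (Fin m)}

-- Raising the blue leaf of a cut replaces the rest of the chain by that leaf; `htail` ensures that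
-- the result is still a chain whose tail is obtained from `tail`.
theorem raisedFrom_chainB_iff (htail : RaisedFrom tail (.leaf .blue)) :
    RaisedFrom (chainB fs tail) T ↔
      ∃ fs' tail', fs'.Sublist fs ∧ RaisedFrom tail tail' ∧ T = chainB fs' tail' := by
  induction fs generalizing T with
  | nil => simp [chainB]
  | cons f fs ih =>
    change RaisedFrom (.node f 0 (chainB fs tail) (.leaf .blue)) T ↔ _
    simp only [raisedFrom_node_iff, ih, raisedFrom_leaf_iff]
    constructor
    · rintro (⟨fs', tail', hfs, ht, rfl⟩ | rfl | ⟨_, _, ⟨fs', tail', hfs, ht, rfl⟩, rfl, rfl⟩)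
      · exact ⟨fs', tail', hfs.cons f, ht, rfl⟩
      · exact ⟨[], .leaf .blue, List.nil_sublist _, htail, rfl⟩
      · exact ⟨f :: fs', tail', hfs.cons_cons f, ht, rfl⟩
    · rintro ⟨_, tail', hsub, ht, rfl⟩
      obtain hfs | ⟨fs', rfl, hfs⟩ := List.sublist_cons_iff.1 hsub
      · exact .inl ⟨_, tail', hfs, ht, rfl⟩
      · exact .inr <| .inr ⟨_, _, ⟨_, tail', hfs, ht, rfl⟩, rfl, rfl⟩

theorem classify_chainB (e : Fin m → ℝ) :
    (chainB fs tail).classify e = if ∃ f ∈ fs, 0 < e f then .blue else tail.classify e := by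
  induction fs with
  | nil => simp [chainB]
  | cons f fs ih =>
    change (if e f ≤ 0 then (chainB fs tail).classify e else .blue) = _
    by_cases hf : 0 < e f
    · simp [hf]
    · simp [hf, ih, not_lt.mp hf]

theorem indVec_pos_iff {S : Finset (Fin m)} {i : Fin m} : 0 < indVec S i ↔ i ∈ S := by
  by_cases h : i ∈ S <;> simp [indVec, h]

theorem indVec_empty : indVec (∅ : Finset (Fin m)) = fun _ => 0 := by
  ext; simp [indVec]

end Chain

section RaisedPath

variable {n : ℕ} {R : Finset (Fin n)}

theorem filter_mem_eq_of_sublist_of_nodup {α : Type*} [DecidableEq α] {l l' : List α}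
    (h : l'.Sublist l) (hl : l.Nodup) : l.filter (· ∈ l') = l' := by
  have hself : l'.filter (· ∈ l') = l' := List.filter_eq_self.2 fun _ ha => decide_eq_true ha
  have hsub : l'.Sublist (l.filter (· ∈ l')) := by
    conv_lhs => rw [← hself]
    exact h.filter _
  have hperm : l'.Perm (l.filter (· ∈ l')) := by
    rw [List.perm_ext_iff_of_nodup (hl.sublist h) (hl.filter _)]
    simpa using fun _ ha => h.subset ha
  exact (hsub.eq_of_length hperm.length_eq).symm

/-- The features of the vertex cuts `v ≤ 0`, `v ∉ R`, of `TGkeep n R`, from the root downwards. -/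
def keptCuts (n : ℕ) (R : Finset (Fin n)) : List (Fin (n + 1)) :=
  ((List.ofFn fun i : Fin n => i).filter fun v => decide (v ∉ R)).map Fin.castSucc

theorem last_notMem_keptCuts : Fin.last n ∉ keptCuts n R := by
  simp [keptCuts, Fin.castSucc_ne_last]

theorem exists_mem_keptCuts {p : Fin (n + 1) → Prop} :
    (∃ f ∈ keptCuts n R, p f) ↔ ∃ v ∉ R, p v.castSucc := by
  simp [keptCuts]

theorem sublist_keptCuts_empty_iff {fs : List (Fin (n + 1))} :
    fs.Sublist (keptCuts n ∅) ↔ ∃ R, fs = keptCuts n R := by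
  constructor
  · intro h
    obtain ⟨l, hl, rfl⟩ := List.sublist_map_iff.1 h
    have hfilter : (List.finRange n).filter (· ∈ l) = l :=
      filter_mem_eq_of_sublist_of_nodup (by simpa [List.ofFn_eq_map] using hl)
        (List.nodup_finRange n)
    exact ⟨l.toFinsetᶜ, by simp [keptCuts, List.ofFn_eq_map, hfilter]⟩
  · rintro ⟨R, rfl⟩
    have hall : keptCuts n ∅ = (List.ofFn fun i : Fin n => i).map Fin.castSucc := by
      simp [keptCuts]
    exact hall ▸ List.filter_sublist.map Fin.castSucc

theorem raisedFrom_TG_iff {T : DTree (Fin (n + 1))} :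
    RaisedFrom (TG n) T ↔
      ∃ R, T = TGkeep n R ∨ ∃ c, T = chainB (keptCuts n R) (.leaf c) := by
  have hTG : TG n = chainB (keptCuts n ∅) (.node (Fin.last n) 0 (.leaf .red) (.leaf .blue)) := by
    simp [TG, keptCuts, List.map_ofFn, Function.comp_def]
  rw [hTG, raisedFrom_chainB_iff (by simp [raisedFrom_node_leaf_leaf_iff])]
  simp only [raisedFrom_node_leaf_leaf_iff]
  constructor
  · rintro ⟨fs, tail, hfs, htail, rfl⟩
    obtain ⟨R, rfl⟩ := sublist_keptCuts_empty_iff.1 hfs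
    rcases htail with rfl | rfl | rfl
    exacts [⟨R, .inl rfl⟩, ⟨R, .inr ⟨.red, rfl⟩⟩, ⟨R, .inr ⟨.blue, rfl⟩⟩]
  · rintro ⟨R, hT⟩
    have hsub := sublist_keptCuts_empty_iff.2 ⟨R, rfl⟩
    rcases hT with rfl | ⟨_ | _, rfl⟩
    exacts [⟨_, _, hsub, .inl rfl, rfl⟩, ⟨_, _, hsub, .inr <| .inr rfl, rfl⟩,
      ⟨_, _, hsub, .inr <| .inl rfl, rfl⟩]

theorem classify_TGkeep_indVec (S : Finset (Fin (n + 1))) :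
    (TGkeep n R).classify (indVec S) =
      if (∃ v ∉ R, v.castSucc ∈ S) ∨ Fin.last n ∈ S then .blue else .red := by
  change (chainB (keptCuts n R) _).classify _ = _
  simp only [classify_chainB, indVec_pos_iff, exists_mem_keptCuts, DTree.classify, ← not_lt,
    ite_not, ite_or]

theorem classify_TGkeep_edgeEx (e : Sym2 (Fin n)) :
    (TGkeep n R).classify (edgeEx n e) = if ∃ v ∈ e, v ∉ R then .blue else .red := by
  induction e with | _ v w
  change (TGkeep n R).classify (indVec {v.castSucc, w.castSucc}) = _
  simp [classify_TGkeep_indVec, (Fin.castSucc_ne_last _).symm, and_or_left, exists_or]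

end RaisedPath

section Errors

open scoped Finset

section TrainingSet

variable {ι : Type} (T : DTree ι)

theorem errCountM_add (A B : Multiset ((ι → ℝ) × Label)) :
    errCountM T (A + B) = errCountM T A + errCountM T B := by
  simp [errCountM]

theorem errCountM_singleton (e : ι → ℝ) (c : Label) :
    errCountM T {(e, c)} = if T.classify e ≠ c then 1 else 0 := by
  simp only [errCountM, Multiset.filter_singleton]
  split <;> rfl

theorem errCountM_replicate (k : ℕ) (x : (ι → ℝ) × Label) :
    errCountM T (.replicate k x) = k * errCountM T {x} := by
  simp [errCountM, ← Multiset.nsmul_singleton, Multiset.filter_nsmul]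

theorem errCountM_bind {α : Type*} (s : Multiset α) (g : α → Multiset ((ι → ℝ) × Label)) :
    errCountM T (s.bind g) = (s.map fun a => errCountM T (g a)).sum := by
  simp only [errCountM, Multiset.filter_bind, Multiset.card_bind, Function.comp_def]

end TrainingSet

theorem card_edgeFinset_filter_eq_zero_iff {V : Type*} (G : SimpleGraph V) [Fintype G.edgeSet]
    (R : Finset V) [DecidablePred fun e : Sym2 V => ∀ v ∈ e, v ∈ R] :
    #{e ∈ G.edgeFinset | ∀ v ∈ e, v ∈ R} = 0 ↔ ∀ v ∈ R, ∀ w ∈ R, ¬ G.Adj v w := by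
  simp only [Finset.card_eq_zero, Finset.filter_eq_empty_iff, Sym2.forall,
    SimpleGraph.mem_edgeFinset, SimpleGraph.mem_edgeSet, Sym2.ball]
  tauto

variable {n : ℕ} (G : SimpleGraph (Fin n)) [DecidableRel G.Adj] (κ : ℕ)

theorem errCountM_E0 (T : DTree (Fin (n + 1))) :
    errCountM T (E0 G κ) =
      n * #{e ∈ G.edgeFinset | T.classify (edgeEx n e) ≠ .blue}
      + (#{v | T.classify (vertEx n v) ≠ .blue}
        + #{v : Fin n | T.classify (indVec {v.castSucc}) ≠ .red})
      + n ^ 2 * (if T.classify (fun _ => 0) ≠ .red then 1 else 0)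
      + (n - κ + 1) * (if T.classify (starEx n) ≠ .blue then 1 else 0) := by
  simp only [E0, Multiset.insert_eq_cons, ← Multiset.singleton_add, errCountM_add, errCountM_bind,
    errCountM_replicate, errCountM_singleton, ← Finset.sum_eq_multiset_sum, ← Finset.mul_sum,
    Finset.sum_add_distrib, Finset.card_filter]

theorem errCountM_TGkeep (R : Finset (Fin n)) :
    errCountM (TGkeep n R) (E0 G κ) =
      n * #{e ∈ G.edgeFinset | ∀ v ∈ e, v ∈ R} + #Rᶜ := by
  rw [errCountM_E0, ← indVec_empty]
  simp [classify_TGkeep_edgeEx, classify_TGkeep_indVec, vertEx, starEx,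
    (Fin.castSucc_ne_last _).symm, Finset.filter_not, ← Finset.compl_eq_univ_sdiff]

variable {G κ}

theorem errCountM_TGkeep_le_iff (hκ : 1 ≤ κ) (hκn : κ ≤ n) {R : Finset (Fin n)} :
    errCountM (TGkeep n R) (E0 G κ) ≤ n - κ ↔
      κ ≤ #R ∧ ∀ v ∈ R, ∀ w ∈ R, ¬ G.Adj v w := by
  have hR : #R ≤ n := by simpa using R.card_le_univ
  rw [errCountM_TGkeep, ← card_edgeFinset_filter_eq_zero_iff, Finset.card_compl, Fintype.card_fin]
  rcases Nat.eq_zero_or_pos #{e ∈ G.edgeFinset | ∀ v ∈ e, v ∈ R} with h | h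
  · rw [h]
    omega
  · have hle := Nat.le_mul_of_pos_right n h
    omega

theorem lt_errCountM_chainB_leaf (hκ : 1 ≤ κ) (hκn : κ ≤ n) {fs : List (Fin (n + 1))}
    (hfs : Fin.last n ∉ fs) (c : Label) :
    n - κ < errCountM (chainB fs (.leaf c)) (E0 G κ) := by
  rw [errCountM_E0]
  cases c with
  | blue =>
    have hzero : (chainB fs (.leaf .blue)).classify (fun _ => 0) ≠ .red := by
      simp [classify_chainB, DTree.classify]
    have hsq : n ≤ n ^ 2 := Nat.le_self_pow two_ne_zero n
    rw [if_pos hzero]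
    omega
  | red =>
    have hstar : (chainB fs (.leaf .red)).classify (starEx n) ≠ .blue := by
      simp [classify_chainB, starEx, indVec_pos_iff, hfs, DTree.classify]
    rw [if_pos hstar]
    omega

end Errors

/-- For a graph `G` on `n` vertices and `1 ≤ κ ≤ n`: a decision
tree with at most `n − κ` errors on `E₀(G,κ)` is obtainable from `T(G)` by a
(possibly empty) sequence of subtree raising operations iff `G` has an independent
set of size `κ`. -/
theorem stmt12 {n : ℕ} (G : SimpleGraph (Fin n)) [DecidableRel G.Adj]
    (κ : ℕ) (h1 : 1 ≤ κ) (h2 : κ ≤ n) :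
    (∃ T', RaisedFrom (TG n) T' ∧ errCountM T' (E0 G κ) ≤ n - κ)
    ↔ ∃ S : Finset (Fin n), S.card = κ ∧ ∀ v ∈ S, ∀ w ∈ S, ¬ G.Adj v w := by
  calc (∃ T', RaisedFrom (TG n) T' ∧ errCountM T' (E0 G κ) ≤ n - κ)
    _ ↔ ∃ R, errCountM (TGkeep n R) (E0 G κ) ≤ n - κ := by
      constructor
      · rintro ⟨T', hT', herr⟩
        obtain ⟨R, rfl | ⟨c, rfl⟩⟩ := raisedFrom_TG_iff.1 hT'
        · exact ⟨R, herr⟩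
        · exact absurd herr (lt_errCountM_chainB_leaf h1 h2 last_notMem_keptCuts c).not_ge
      · rintro ⟨R, herr⟩
        exact ⟨TGkeep n R, raisedFrom_TG_iff.2 ⟨R, .inl rfl⟩, herr⟩
    _ ↔ ∃ R : Finset (Fin n), κ ≤ R.card ∧ ∀ v ∈ R, ∀ w ∈ R, ¬ G.Adj v w := by
      simp only [errCountM_TGkeep_le_iff h1 h2]
    _ ↔ ∃ S : Finset (Fin n), S.card = κ ∧ ∀ v ∈ S, ∀ w ∈ S, ¬ G.Adj v w := by
      constructor
      · rintro ⟨R, hcard, hR⟩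
        obtain ⟨S, hSR, hS⟩ := Finset.exists_subset_card_eq hcard
        exact ⟨S, hS, fun v hv w hw => hR v (hSR hv) w (hSR hw)⟩
      · rintro ⟨S, rfl, hS⟩
        exact ⟨S, le_rfl, hS⟩
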